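/- Let (V, E) be a finite DAG with V nonempty, execution times X : V → ℕ, and ASAP start-time function S_X. Then the makespan of the ASAP schedule equals the length of a longest path in the DAG: max over vertices v of (S_X v + X v) = max over all paths v_1, …, v_t from a source (v_1 a source and E v_j v_{j+1} for 1 ≤ j < t) of Σ_{j=1}^{t} X v_j. (This common value is the critical path length, or span, of the DAG.) -/

import Mathlib

open scoped Classical

/-!
Along an edge `u → v` the recursion gives `S u + X u ≤ S v`, and telescoping along a path from a
source, where `S = 0`, bounds the length of the path by the finishing time of its last vertex.
Conversely, every vertex `v` that is not a source has a critical predecessor `u`, one with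
`S u + X u = S v`. Going back along critical predecessors must stop, and can only stop at a source;
the path traced out has the finishing time of its last vertex as its length.
-/

theorem wellFounded_of_forall_not_transGen_self {V : Type*} [Finite V] {E : V → V → Prop}
    (hE : ∀ v, ¬ Relation.TransGen E v v) : WellFounded E :=
  have : Std.Irrefl (Relation.TransGen E) := ⟨hE⟩
  Subrelation.wf Relation.TransGen.single (Finite.wellFounded_of_trans_of_irrefl _)

theorem isGreatest_image_finset_sup {ι α : Type*} [LinearOrder α] [OrderBot α] {s : Finset ι}
    (hs : s.Nonempty) (f : ι → α) : IsGreatest (f '' s) (s.sup f) := by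
  obtain ⟨i, hi, hsup⟩ := s.exists_mem_eq_sup hs f
  exact ⟨⟨i, hi, hsup.symm⟩, Set.forall_mem_image.2 fun _ => Finset.le_sup⟩

section ASAP

variable {V M : Type*} {E : V → V → Prop} {X S : V → M} [AddMonoid M]

/-- The lengths of the paths from a source: a path is a nonempty list of vertices, and its length is
the sum of the execution times of all its vertices, the last one included. -/
def sourcePathLengths (E : V → V → Prop) (X : V → M) : Set M :=
  {d | ∃ (p : List V) (hp : p ≠ []),
    p.IsChain E ∧ (∀ u, ¬ E u (p.head hp)) ∧ (p.map X).sum = d}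

/-- `S` is an ASAP start-time function for the execution times `X`. Sources are treated apart, so
that `M` needs no least element and execution times may be negative. -/
structure IsASAPStart [LE M] (E : V → V → Prop) (X S : V → M) : Prop where
  eq_zero_of_source : ∀ v, (∀ u, ¬ E u v) → S v = 0
  isGreatest : ∀ v, (∃ u, E u v) → IsGreatest ((fun u => S u + X u) '' {u | E u v}) (S v)

theorem isASAPStart_of_forall_eq_sup [Fintype V] [DecidableRel E] [LinearOrder M] [OrderBot M]
    [CanonicallyOrderedAdd M]
    (hS : ∀ v, S v = (Finset.univ.filter (fun u => E u v)).sup (fun u => S u + X u)) :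
    IsASAPStart E X S where
  eq_zero_of_source v hv := by
    rw [hS v, Finset.filter_false_of_mem fun u _ => hv u, Finset.sup_empty, bot_eq_zero]
  isGreatest v := by
    rintro ⟨u, huv⟩
    have hne : (Finset.univ.filter (fun u => E u v)).Nonempty := ⟨u, by simpa using huv⟩
    simpa [← hS v] using isGreatest_image_finset_sup hne (fun u => S u + X u)

namespace IsASAPStart

theorem add_le_of_edge [LE M] (h : IsASAPStart E X S) {u v : V} (huv : E u v) :
    S u + X u ≤ S v :=
  (h.isGreatest v ⟨u, huv⟩).2 ⟨u, huv, rfl⟩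

theorem exists_edge_add_eq [LE M] (h : IsASAPStart E X S) {v : V} (hv : ∃ u, E u v) :
    ∃ u, E u v ∧ S u + X u = S v :=
  (h.isGreatest v hv).1

theorem head_add_sum_le_getLast [Preorder M] [AddRightMono M] (h : IsASAPStart E X S) {p : List V}
    (hp : p ≠ []) (hpath : p.IsChain E) :
    S (p.head hp) + (p.map X).sum ≤ S (p.getLast hp) + X (p.getLast hp) := by
  induction hpath with
  | nil => contradiction
  | singleton v => simp
  | @cons_cons u v p huv _ ih =>
    calc S u + ((u :: v :: p).map X).sum
        = S u + X u + ((v :: p).map X).sum := by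
          rw [List.map_cons, List.sum_cons, add_assoc]
      _ ≤ S v + ((v :: p).map X).sum := by gcongr; exact h.add_le_of_edge huv
      _ ≤ _ := ih (List.cons_ne_nil v p)

theorem exists_path_sum_eq [LE M] (h : IsASAPStart E X S) (hE : WellFounded E) (v : V) :
    ∃ (p : List V) (hp : p ≠ []), p.IsChain E ∧ (∀ u, ¬ E u (p.head hp)) ∧ p.getLast hp = v ∧
      (p.map X).sum = S v + X v := by
  induction v using hE.induction with
  | _ v ih =>
    by_cases hv : ∃ u, E u v
    · obtain ⟨u, huv, hSv⟩ := h.exists_edge_add_eq hv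
      obtain ⟨p, hp, hpath, hsource, rfl, hsum⟩ := ih u huv
      refine ⟨p ++ [v], by simp, ?_, ?_, by simp, by simp [hsum, hSv]⟩
      · exact hpath.append (.singleton v) (by simp [List.getLast?_eq_getLast_of_ne_nil hp, huv])
      · rwa [List.head_append_of_ne_nil hp]
    · have hsource : ∀ u, ¬ E u v := not_exists.1 hv
      exact ⟨[v], by simp, .singleton v, hsource, rfl, by simp [h.eq_zero_of_source v hsource]⟩

theorem add_mem_sourcePathLengths [LE M] (h : IsASAPStart E X S) (hE : WellFounded E) (v : V) :
    S v + X v ∈ sourcePathLengths E X := by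
  obtain ⟨p, hp, hpath, hsource, -, hsum⟩ := h.exists_path_sum_eq hE v
  exact ⟨p, hp, hpath, hsource, hsum⟩

theorem exists_le_add_of_mem_sourcePathLengths [Preorder M] [AddRightMono M]
    (h : IsASAPStart E X S) {d : M} (hd : d ∈ sourcePathLengths E X) :
    ∃ v, d ≤ S v + X v := by
  obtain ⟨p, hp, hpath, hsource, rfl⟩ := hd
  refine ⟨p.getLast hp, ?_⟩
  simpa [h.eq_zero_of_source _ hsource] using h.head_add_sum_le_getLast hp hpath

end IsASAPStart

theorem asap_makespan_eq_span_general [PartialOrder M] [AddRightMono M] (hE : WellFounded E)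
    (hS : IsASAPStart E X S) {m : M} :
    IsGreatest (Set.range fun v => S v + X v) m ↔ IsGreatest (sourcePathLengths E X) m := by
  have hsub : Set.range (fun v => S v + X v) ⊆ sourcePathLengths E X :=
    Set.range_subset_iff.2 (hS.add_mem_sourcePathLengths hE)
  constructor
  · rintro ⟨hm, hmax⟩
    refine ⟨hsub hm, fun d hd => ?_⟩
    obtain ⟨v, hdv⟩ := hS.exists_le_add_of_mem_sourcePathLengths hd
    exact hdv.trans (hmax ⟨v, rfl⟩)
  · rintro ⟨hm, hmax⟩
    obtain ⟨v, hmv⟩ := hS.exists_le_add_of_mem_sourcePathLengths hm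
    exact ⟨⟨v, (hmax (hsub ⟨v, rfl⟩)).antisymm hmv⟩, fun d hd => hmax (hsub hd)⟩

end ASAP

/-- Let `S` be the ASAP start-time function of a finite DAG `(V, E)`
(with `V` nonempty) with execution times `X`.  The makespan of the ASAP schedule,
`max over v of (S v + X v)`, equals the length of a longest path starting at a
source: it is the greatest element of the set of sums `Σ_{j=1}^{t} X v_j` over all
paths `v₁, …, v_t` with `v₁` a source and `E v_j v_{j+1}` for `1 ≤ j < t`. -/
theorem asap_makespan_eq_span {V : Type*} [Fintype V] [Nonempty V]
    (E : V → V → Prop)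
    (hE : ∀ v : V, ¬ Relation.TransGen E v v) (X S : V → ℕ)
    (hS : ∀ v : V,
      S v = (Finset.univ.filter (fun u => E u v)).sup (fun u => S u + X u)) :
    IsGreatest {d : ℕ | ∃ (p : List V) (hp : p ≠ []),
        List.Chain' E p ∧ (∀ u : V, ¬ E u (p.head hp)) ∧ (p.map X).sum = d}
      (Finset.univ.sup (fun v => S v + X v)) := by
  refine (asap_makespan_eq_span_general (wellFounded_of_forall_not_transGen_self hE)
    (isASAPStart_of_forall_eq_sup hS)).1 ?_
  simpa using isGreatest_image_finset_sup Finset.univ_nonempty (fun v => S v + X v)
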